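/- Fix m ∈ (−1,1), n ∈ ℕ and h ∈ ℝ^n with h ≠ 0. Then M_n(h,·) is continuous and infinitely differentiable in λ, and: (1) M_n(h,0) = M'_n(h,0) = 0; (2) M''_n(h,λ) > 0 for all λ ∈ ℝ; (3) {M'_n(h,λ) : λ ∈ (0,∞)} = (0, Σ_n(h)); (4) there exists a continuous strictly increasing function Λ_n(h,·) : [0, Σ_n(h)) → [0,∞) such that M'_n(h, Λ_n(h,a)) = a for all a ∈ [0,Σ_n(h)), with Λ_n(h,0) = 0 and Λ_n(h, (0,Σ_n(h))) = (0,∞). -/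

import Mathlib

open MeasureTheory Real Filter Set
open scoped Topology BigOperators

noncomputable section

/-- `g(λ) = log(((1+m)/2)e^{λ(1−m)} + ((1−m)/2)e^{−λ(1+m)})`. -/
def gfun (m lam : ℝ) : ℝ :=
  Real.log ((1 + m) / 2 * Real.exp (lam * (1 - m)) + (1 - m) / 2 * Real.exp (-(lam * (1 + m))))

/-- `M_n(h,λ) = Σ_{i=1}^n g(λ h_i)` for `h ∈ ℝ^n`. -/
def Mn {n : ℕ} (m : ℝ) (h : Fin n → ℝ) (lam : ℝ) : ℝ :=
  ∑ i : Fin n, gfun m (lam * h i)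

/-- `Σ_n(h) = −m Σ_{i=1}^n h_i + Σ_{i=1}^n |h_i|`. -/
def SigmaN {n : ℕ} (m : ℝ) (h : Fin n → ℝ) : ℝ :=
  -m * ∑ i : Fin n, h i + ∑ i : Fin n, |h i|

/-!
Writing `m = tanh a`, one has `g(x) = log cosh (x + a) - log cosh a - x tanh a`, so that
`g'(x) = tanh (x + a) - tanh a` and `g''(x) = 1 - tanh² (x + a) > 0`. Hence `M_n'` is a strictly
increasing sum of shifted and rescaled hyperbolic tangents. It vanishes at `0`, and its `i`-th term
tends to `|h_i| - m h_i` at infinity, whatever the sign of `h_i`. Then `Λ_n` is the inverse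
of `M_n'`.
-/

section StrictMonoInverse

variable {α β : Type*}

section Image

variable [ConditionallyCompleteLinearOrder α] [DenselyOrdered α] [NoMaxOrder α]
  [TopologicalSpace α] [OrderTopology α] [LinearOrder β] [TopologicalSpace β]
  [OrderClosedTopology β] {f : α → β} {a : α} {b : β}

theorem image_Ici_of_strictMonoOn_of_tendsto
    (hcont : ContinuousOn f (Ici a)) (hmono : StrictMonoOn f (Ici a))
    (hlim : Tendsto f atTop (𝓝 b)) : f '' Ici a = Ico (f a) b := by
  have : Nonempty α := ⟨a⟩
  refine Subset.antisymm ?_ <| isPreconnected_Ici.intermediate_value_Ico self_mem_Ici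
    (le_principal_iff.2 (Ici_mem_atTop a)) hcont hlim
  rintro _ ⟨x, hx, rfl⟩
  obtain ⟨y, hxy⟩ := exists_gt x
  have hy : y ∈ Ici a := le_trans hx hxy.le
  have hyb : f y ≤ b := ge_of_tendsto hlim <| (eventually_ge_atTop y).mono fun z hyz =>
    hmono.monotoneOn hy (le_trans hy hyz) hyz
  exact ⟨hmono.monotoneOn self_mem_Ici hx hx, (hmono hx hy hxy).trans_le hyb⟩

theorem image_Ioi_of_strictMonoOn_of_tendsto
    (hcont : ContinuousOn f (Ici a)) (hmono : StrictMonoOn f (Ici a))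
    (hlim : Tendsto f atTop (𝓝 b)) : f '' Ioi a = Ioo (f a) b := by
  rw [← Ici_sdiff_left, hmono.injOn.image_sdiff_subset (singleton_subset_iff.2 self_mem_Ici),
    image_Ici_of_strictMonoOn_of_tendsto hcont hmono hlim, image_singleton, Ico_sdiff_left]

end Image

theorem strictMonoOn_invFun_range [LinearOrder α] [Nonempty α] [Preorder β]
    {f : α → β} (hmono : StrictMono f) : StrictMonoOn (Function.invFun f) (range f) := by
  rintro _ ⟨x, rfl⟩ _ ⟨y, rfl⟩ hxy
  simpa only [Function.leftInverse_invFun hmono.injective _] using hmono.lt_iff_lt.1 hxy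

theorem continuousOn_invFun_range [LinearOrder α] [TopologicalSpace α] [OrderTopology α]
    [ConnectedSpace α] [LinearOrder β] [TopologicalSpace β] [OrderTopology β] {f : α → β}
    (hcont : Continuous f) (hmono : StrictMono f) :
    ContinuousOn (Function.invFun f) (range f) := by
  have hemb := hmono.isEmbedding_of_ordConnected (isPreconnected_range hcont).ordConnected
  rw [hemb.isInducing.continuousOn_iff]
  exact continuousOn_id.congr fun _ hy => Function.invFun_eq hy

end StrictMonoInverse

section SumOfRescalings

theorem hasDerivAt_sum_comp_mul_const {ι 𝕜 E : Type*} [NontriviallyNormedField 𝕜]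
    [NormedAddCommGroup E] [NormedSpace 𝕜 E] {s : Finset ι}
    {c : ι → 𝕜} {f : ι → 𝕜 → E} {f' : ι → E} {x : 𝕜}
    (hf : ∀ i ∈ s, HasDerivAt (f i) (f' i) (x * c i)) :
    HasDerivAt (fun y => ∑ i ∈ s, f i (y * c i)) (∑ i ∈ s, c i • f' i) x :=
  HasDerivAt.fun_sum fun i hi => (hf i hi).scomp x (hasDerivAt_mul_const (c i))

theorem tendsto_comp_mul_const_mul_const {𝕜 : Type*} [Field 𝕜] [LinearOrder 𝕜]
    [IsStrictOrderedRing 𝕜] [TopologicalSpace 𝕜] [ContinuousMul 𝕜] {f : 𝕜 → 𝕜} {p q : 𝕜}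
    (htop : Tendsto f atTop (𝓝 (p + q))) (hbot : Tendsto f atBot (𝓝 (p - q))) (c : 𝕜) :
    Tendsto (fun x => c * f (x * c)) atTop (𝓝 (p * c + q * |c|)) := by
  rcases lt_trichotomy c 0 with hc | rfl | hc
  · rw [abs_of_neg hc, show p * c + q * -c = c * (p - q) by ring]
    exact (hbot.comp (tendsto_id.atTop_mul_const_of_neg hc)).const_mul c
  · simpa using tendsto_const_nhds
  · rw [abs_of_pos hc, show p * c + q * c = c * (p + q) by ring]
    exact (htop.comp (tendsto_id.atTop_mul_const hc)).const_mul c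

end SumOfRescalings

section Tanh

theorem hasDerivAt_tanh (x : ℝ) : HasDerivAt tanh (1 - tanh x ^ 2) x := by
  have hcosh : cosh x ≠ 0 := (cosh_pos x).ne'
  have hquot := (hasDerivAt_sinh x).div (hasDerivAt_cosh x) hcosh
  rw [show tanh = sinh / cosh from funext tanh_eq_sinh_div_cosh]
  refine hquot.congr_deriv ?_
  rw [Pi.div_apply]
  field_simp

theorem strictMono_tanh : StrictMono tanh :=
  strictMono_of_hasDerivAt_pos hasDerivAt_tanh fun x => sub_pos.2 (tanh_sq_lt_one x)

theorem range_tanh : range tanh = Ioo (-1) 1 := by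
  rw [← image_univ, tanh_bijOn.image_eq]

theorem tendsto_tanh_atTop : Tendsto tanh atTop (𝓝 1) :=
  tendsto_atTop_isLUB strictMono_tanh.monotone (range_tanh ▸ isLUB_Ioo (by norm_num))

theorem tendsto_tanh_atBot : Tendsto tanh atBot (𝓝 (-1)) :=
  tendsto_atBot_isGLB strictMono_tanh.monotone (range_tanh ▸ isGLB_Ioo (by norm_num))

theorem hasDerivAt_log_cosh (x : ℝ) : HasDerivAt (fun y => log (cosh y)) (tanh x) x :=
  tanh_eq_sinh_div_cosh x ▸ (hasDerivAt_cosh x).log (cosh_pos x).ne'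

end Tanh

section LogMomentGeneratingFunction

theorem gfun_zero (m : ℝ) : gfun m 0 = 0 := by
  have hweights : (1 + m) / 2 + (1 - m) / 2 = 1 := by ring
  simp [gfun, hweights]

theorem gfun_tanh (a x : ℝ) :
    gfun (tanh a) x = log (cosh (x + a)) - log (cosh a) - tanh a * x := by
  have ha : cosh a ≠ 0 := (cosh_pos a).ne'
  have hfactor (m : ℝ) : (1 + m) / 2 * exp (x * (1 - m)) + (1 - m) / 2 * exp (-(x * (1 + m))) =
      (cosh x + m * sinh x) * exp (-(m * x)) := by
    rw [show x * (1 - m) = x + -(m * x) by ring, show -(x * (1 + m)) = -x + -(m * x) by ring,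
      exp_add, exp_add, cosh_eq, sinh_eq]
    ring
  have hshift : cosh x + tanh a * sinh x = cosh (x + a) / cosh a := by
    rw [tanh_eq_sinh_div_cosh, cosh_add]
    field_simp
  rw [gfun, hfactor, hshift, log_mul (div_ne_zero (cosh_pos _).ne' ha) (exp_ne_zero _), log_exp,
    log_div (cosh_pos _).ne' ha, ← sub_eq_add_neg]

theorem contDiff_gfun_tanh (a : ℝ) {k : WithTop ℕ∞} : ContDiff ℝ k (gfun (tanh a)) := by
  have hlog : ContDiff ℝ k fun x => log (cosh (x + a)) :=
    (contDiff_cosh.comp (contDiff_id.add contDiff_const)).log fun x => (cosh_pos (x + a)).ne'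
  rw [funext (gfun_tanh a)]
  fun_prop

theorem hasDerivAt_gfun_tanh (a x : ℝ) :
    HasDerivAt (gfun (tanh a)) (tanh (x + a) - tanh a) x := by
  rw [funext (gfun_tanh a)]
  exact (((hasDerivAt_log_cosh (x + a)).comp_add_const x a).sub_const _).sub
    (hasDerivAt_const_mul (tanh a))

variable {n : ℕ}

theorem Mn_zero (m : ℝ) (h : Fin n → ℝ) : Mn m h 0 = 0 := by
  simp [Mn, gfun_zero]

theorem contDiff_Mn_tanh (a : ℝ) (h : Fin n → ℝ) {k : WithTop ℕ∞} :
    ContDiff ℝ k (Mn (tanh a) h) :=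
  ContDiff.sum fun _ _ => (contDiff_gfun_tanh a).comp (contDiff_id.mul contDiff_const)

theorem deriv_Mn_tanh (a : ℝ) (h : Fin n → ℝ) :
    deriv (Mn (tanh a) h) = fun x => ∑ i, h i * (tanh (x * h i + a) - tanh a) :=
  funext fun _ => (hasDerivAt_sum_comp_mul_const fun _ _ => hasDerivAt_gfun_tanh a _).deriv

theorem deriv_Mn_tanh_zero (a : ℝ) (h : Fin n → ℝ) : deriv (Mn (tanh a) h) 0 = 0 := by
  simp [deriv_Mn_tanh]

theorem hasDerivAt_deriv_Mn_tanh (a : ℝ) (h : Fin n → ℝ) (x : ℝ) :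
    HasDerivAt (deriv (Mn (tanh a) h)) (∑ i, h i * (h i * (1 - tanh (x * h i + a) ^ 2))) x := by
  rw [deriv_Mn_tanh]
  exact hasDerivAt_sum_comp_mul_const (f := fun i y => h i * (tanh (y + a) - tanh a)) fun i _ =>
    (((hasDerivAt_tanh _).comp_add_const _ a).sub_const _).const_mul (h i)

theorem deriv_deriv_Mn_tanh_pos (a : ℝ) {h : Fin n → ℝ} (hne : h ≠ 0) (x : ℝ) :
    0 < deriv (deriv (Mn (tanh a) h)) x := by
  have htanh (y : ℝ) : 0 < 1 - tanh y ^ 2 := sub_pos.2 (tanh_sq_lt_one y)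
  obtain ⟨j, hj⟩ := Function.ne_iff.1 hne
  simp only [(hasDerivAt_deriv_Mn_tanh a h x).deriv, ← mul_assoc]
  exact Finset.sum_pos' (fun i _ => mul_nonneg (mul_self_nonneg _) (htanh _).le)
    ⟨j, Finset.mem_univ j, mul_pos (mul_self_pos.2 hj) (htanh _)⟩

theorem tendsto_deriv_Mn_tanh_atTop (a : ℝ) (h : Fin n → ℝ) :
    Tendsto (deriv (Mn (tanh a) h)) atTop (𝓝 (SigmaN (tanh a) h)) := by
  have htop : Tendsto (fun y => tanh (y + a) - tanh a) atTop (𝓝 (-tanh a + 1)) := by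
    rw [neg_add_eq_sub]
    exact (tendsto_tanh_atTop.comp (tendsto_atTop_add_const_right _ a tendsto_id)).sub_const _
  have hbot : Tendsto (fun y => tanh (y + a) - tanh a) atBot (𝓝 (-tanh a - 1)) := by
    rw [show -tanh a - 1 = -1 - tanh a by ring]
    exact (tendsto_tanh_atBot.comp (tendsto_atBot_add_const_right _ a tendsto_id)).sub_const _
  rw [deriv_Mn_tanh, SigmaN, Finset.mul_sum, ← Finset.sum_add_distrib]
  refine tendsto_finsetSum _ fun i _ => ?_
  simpa only [one_mul] using tendsto_comp_mul_const_mul_const htop hbot (h i)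

end LogMomentGeneratingFunction

/-- analytical properties of the log-moment generating function `M_n(h,·)`. -/
theorem stmt6 (m : ℝ) (hm : m ∈ Set.Ioo (-1 : ℝ) 1) (n : ℕ) (h : Fin n → ℝ)
    (hne : h ≠ 0) :
    -- continuity and infinite differentiability
    ContDiff ℝ (⊤ : ℕ∞) (Mn m h) ∧
    -- (1)
    (Mn m h 0 = 0 ∧ deriv (Mn m h) 0 = 0) ∧
    -- (2)
    (∀ lam : ℝ, 0 < deriv (deriv (Mn m h)) lam) ∧
    -- (3)
    deriv (Mn m h) '' (Set.Ioi 0) = Set.Ioo 0 (SigmaN m h) ∧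
    -- (4)
    (∃ Lam : ℝ → ℝ,
      ContinuousOn Lam (Set.Ico 0 (SigmaN m h)) ∧
      StrictMonoOn Lam (Set.Ico 0 (SigmaN m h)) ∧
      (∀ a ∈ Set.Ico 0 (SigmaN m h), 0 ≤ Lam a ∧ deriv (Mn m h) (Lam a) = a) ∧
      Lam 0 = 0 ∧ Lam '' (Set.Ioo 0 (SigmaN m h)) = Set.Ioi 0) := by
  obtain ⟨a, -, rfl⟩ := tanh_surjOn hm
  set F := deriv (Mn (tanh a) h)
  have hF0 : F 0 = 0 := deriv_Mn_tanh_zero a h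
  have hpos : ∀ x, 0 < deriv F x := deriv_deriv_Mn_tanh_pos a hne
  have hmono : StrictMono F := strictMono_of_deriv_pos hpos
  have hcont : Continuous F :=
    continuous_iff_continuousAt.2 fun x => (hasDerivAt_deriv_Mn_tanh a h x).continuousAt
  have hlim : Tendsto F atTop (𝓝 (SigmaN (tanh a) h)) := tendsto_deriv_Mn_tanh_atTop a h
  have hIci : F '' Ici 0 = Ico 0 (SigmaN (tanh a) h) := by
    rw [image_Ici_of_strictMonoOn_of_tendsto hcont.continuousOn (hmono.strictMonoOn _) hlim, hF0]
  have hIoi : F '' Ioi 0 = Ioo 0 (SigmaN (tanh a) h) := by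
    rw [image_Ioi_of_strictMonoOn_of_tendsto hcont.continuousOn (hmono.strictMonoOn _) hlim, hF0]
  have hinv : Function.LeftInverse (Function.invFun F) F :=
    Function.leftInverse_invFun hmono.injective
  refine ⟨contDiff_Mn_tanh a h, ⟨Mn_zero _ h, hF0⟩, hpos, hIoi, Function.invFun F, ?_⟩
  rw [← hIci, ← hIoi]
  refine ⟨(continuousOn_invFun_range hcont hmono).mono (image_subset_range F _),
    (strictMonoOn_invFun_range hmono).mono (image_subset_range F _), ?_, ?_, hinv.image_image _⟩
  · rintro _ ⟨x, hx, rfl⟩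
    exact ⟨(hinv x).symm ▸ hx, congrArg F (hinv x)⟩
  · simpa only [hF0] using hinv 0
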